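/- Cut elimination: if a JL-formula is provable in the tableau system JL^e_CS + (cut), then it is also provable in JL^e_CS (without the unrestricted cut rules). -/

import Mathlib

namespace JLTab

/-- Justification terms: variables, constants, application, sum,
verifier `!`, negative verifier `?`, weak negative verifier `?̄`. -/
inductive Term : Type
  | var : ℕ → Term
  | const : ℕ → Term
  | app : Term → Term → Term
  | sum : Term → Term → Term
  | bang : Term → Term
  | quest : Term → Term
  | qbar : Term → Term
  deriving DecidableEq

/-- JL-formulas: `A ::= p | ⊥ | ¬A | A → A | t:A`. -/
inductive Fml : Type
  | prop : ℕ → Fml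
  | bot : Fml
  | neg : Fml → Fml
  | imp : Fml → Fml → Fml
  | box : Term → Fml → Fml
  deriving DecidableEq

/-- A justification logic JL is J extended by any combination of jT, jD, j4, jB, j5. -/
structure Logic where
  hasT : Bool
  hasD : Bool
  has4 : Bool
  hasB : Bool
  has5 : Bool

/-- The basic justification logic J. -/
def Logic.J : Logic := ⟨false, false, false, false, false⟩

/-- The logic of proofs LP = JT4. -/
def Logic.LP : Logic := ⟨true, false, true, false, false⟩

/-- The logic JT45. -/
def Logic.JT45 : Logic := ⟨true, false, true, false, true⟩

/-- Propositional evaluation of a formula, treating propositional variables and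
formulas `t:A` as atoms. -/
def evalProp (v : Fml → Bool) : Fml → Bool
  | .prop n => v (.prop n)
  | .bot => false
  | .neg A => !(evalProp v A)
  | .imp A B => !(evalProp v A) || evalProp v B
  | .box t A => v (.box t A)

/-- A propositional tautology. -/
def IsTaut (A : Fml) : Prop := ∀ v : Fml → Bool, evalProp v A = true

/-- Axiom instances of the justification logic `L`. -/
inductive Axm (L : Logic) : Fml → Prop
  | taut {A} : IsTaut A → Axm L A
  | sumL {s t A} : Axm L (.imp (.box s A) (.box (.sum s t) A))
  | sumR {s t A} : Axm L (.imp (.box s A) (.box (.sum t s) A))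
  | jK {s t A B} :
      Axm L (.imp (.box s (.imp A B)) (.imp (.box t A) (.box (.app s t) B)))
  | jT {t A} : L.hasT = true → Axm L (.imp (.box t A) A)
  | jD {t} : L.hasD = true → Axm L (.imp (.box t .bot) .bot)
  | j4 {t A} : L.has4 = true → Axm L (.imp (.box t A) (.box (.bang t) (.box t A)))
  | jB {t A} : L.hasB = true →
      Axm L (.imp (.neg A) (.box (.qbar t) (.neg (.box t A))))
  | j5 {t A} : L.has5 = true →
      Axm L (.imp (.neg (.box t A)) (.box (.quest t) (.neg (.box t A))))

/-- Formulas of the form `c_{i_n} : ⋯ : c_{i_1} : A` (n ≥ 1) with `A` an axiom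
instance of `L`; exactly the formulas produced by Iterated Axiom Necessitation. -/
inductive IsIAN (L : Logic) : Fml → Prop
  | base {c A} : Axm L A → IsIAN L (.box (.const c) A)
  | step {c F} : IsIAN L F → IsIAN L (.box (.const c) F)

/-- A constant specification for `L`: a downward closed set of formulas of the
form `c_{i_n} : ⋯ : c_{i_1} : A` with `A` an axiom instance of `L`. -/
structure ConstSpec (L : Logic) where
  set : Set Fml
  mem_ian : ∀ F ∈ set, IsIAN L F
  downward : ∀ c F, Fml.box (Term.const c) F ∈ set → IsIAN L F → F ∈ set

/-- The Hilbert system JL_CS: axioms of `L`, Modus Ponens, and Iterated Axiom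
Necessitation restricted to the constant specification `cs`. -/
inductive Deriv (L : Logic) (cs : ConstSpec L) : Fml → Prop
  | axm {A} : Axm L A → Deriv L cs A
  | mp {A B} : Deriv L cs (.imp A B) → Deriv L cs A → Deriv L cs B
  | ian {F} : F ∈ cs.set → Deriv L cs F

/-- An M-model (Mkrtychev model): an admissible evidence function together with
a valuation of propositional variables. -/
structure MModel where
  ev : Term → Set Fml
  val : ℕ → Prop

/-- Truth in an M-model; `t:A` is true iff `A ∈ E(t)`. -/
def MModel.sat (M : MModel) : Fml → Prop
  | .prop n => M.val n
  | .bot => False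
  | .neg A => ¬ M.sat A
  | .imp A B => M.sat A → M.sat B
  | .box t A => A ∈ M.ev t

/-- `M` is an M-model for JL_CS: conditions E1–E3 always, and E4–E8 according to
the extra axioms of the logic `L`. -/
structure IsModel (L : Logic) (cs : ConstSpec L) (M : MModel) : Prop where
  e1 : ∀ s t A B, Fml.imp A B ∈ M.ev s → A ∈ M.ev t → B ∈ M.ev (.app s t)
  e2l : ∀ s t, M.ev s ⊆ M.ev (.sum s t)
  e2r : ∀ s t, M.ev t ⊆ M.ev (.sum s t)
  e3 : ∀ c F, Fml.box (.const c) F ∈ cs.set → F ∈ M.ev (.const c)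
  e4 : L.hasT = true → ∀ t A, A ∈ M.ev t → M.sat A
  e5 : L.hasD = true → ∀ t, Fml.bot ∉ M.ev t
  e6 : L.has4 = true → ∀ t A, A ∈ M.ev t → Fml.box t A ∈ M.ev (.bang t)
  e7 : L.hasB = true → ∀ t A, ¬ M.sat A → Fml.neg (.box t A) ∈ M.ev (.qbar t)
  e8 : L.has5 = true → ∀ t A, A ∉ M.ev t → Fml.neg (.box t A) ∈ M.ev (.quest t)

/-- `A` is JL_CS-valid: true in every M-model of JL_CS. -/
def Valid (L : Logic) (cs : ConstSpec L) (A : Fml) : Prop :=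
  ∀ M : MModel, IsModel L cs M → M.sat A

/-- `Subf A B`: `A` is a subformula of `B`. -/
inductive Subf : Fml → Fml → Prop
  | refl (A) : Subf A A
  | neg {A B} : Subf A B → Subf A (.neg B)
  | impL {A B C} : Subf A B → Subf A (.imp B C)
  | impR {A C B} : Subf A C → Subf A (.imp B C)
  | box {A B t} : Subf A B → Subf A (.box t B)

/-- `A` is a CS-subformula of the root set `R`: a subformula of a formula in
`R ∪ CS`. -/
def CSSub {L : Logic} (cs : ConstSpec L) (R : Set Fml) (A : Fml) : Prop :=
  (∃ B ∈ R, Subf A B) ∨ (∃ F ∈ cs.set, Subf A F)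

/-- `A` is a weak CS-subformula of the root set `R`: a subformula, or the
negation of a subformula, of a formula in `R ∪ CS`. -/
def WeakCSSub {L : Logic} (cs : ConstSpec L) (R : Set Fml) (A : Fml) : Prop :=
  CSSub cs R A ∨ ∃ C, A = Fml.neg C ∧ CSSub cs R C

/-- `SubTm u t`: `u` is a subterm of `t`. -/
inductive SubTm : Term → Term → Prop
  | refl (t) : SubTm t t
  | appL {u s t} : SubTm u s → SubTm u (.app s t)
  | appR {u s t} : SubTm u t → SubTm u (.app s t)
  | sumL {u s t} : SubTm u s → SubTm u (.sum s t)
  | sumR {u s t} : SubTm u t → SubTm u (.sum s t)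
  | bang {u t} : SubTm u t → SubTm u (.bang t)
  | quest {u t} : SubTm u t → SubTm u (.quest t)
  | qbar {u t} : SubTm u t → SubTm u (.qbar t)

/-- `OccT u A`: the term `u` occurs in the formula `A`. -/
inductive OccT (u : Term) : Fml → Prop
  | neg {A} : OccT u A → OccT u (.neg A)
  | impL {A B} : OccT u A → OccT u (.imp A B)
  | impR {A B} : OccT u B → OccT u (.imp A B)
  | boxT {t A} : SubTm u t → OccT u (.box t A)
  | boxF {t A} : OccT u A → OccT u (.box t A)

/-- The term `u` occurs in (some formula of) the root set `R`. -/
def OccRoot (R : Set Fml) (u : Term) : Prop := ∃ B ∈ R, OccT u B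

/-- Nodes of a tableau: JL-formulas `A`, and evidential formulas
`[t,A]` (`pos`) and `∼[t,A]` (`neg`). -/
inductive Node : Type
  | fml : Fml → Node
  | pos : Term → Fml → Node
  | neg : Term → Fml → Node
  deriving DecidableEq

/-- `TabN L cs pb cut R Γ n`: the branch `Γ` of a tableau with root set `R` has
a closed tableau continuation using `n` rule applications.  The flag `pb`
enables the analytic rules (PB), (PB_e); the flag `cut` enables the
unrestricted cut rules (cut_f), (cut_e).  The rules (e), (e_⊥), (!), (?̄), (?)
are enabled according to the extra axioms of the logic `L`.  Base cases are the
four branch-closure conditions. -/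
inductive TabN (L : Logic) (cs : ConstSpec L) (pb cut : Bool) (R : Set Fml) :
    Set Node → ℕ → Prop
  | closeF {Γ A} : Node.fml A ∈ Γ → Node.fml (.neg A) ∈ Γ → TabN L cs pb cut R Γ 0
  | closeE {Γ t A} : Node.pos t A ∈ Γ → Node.neg t A ∈ Γ → TabN L cs pb cut R Γ 0
  | closeBot {Γ} : Node.fml .bot ∈ Γ → TabN L cs pb cut R Γ 0
  | closeCS {Γ c F} : Fml.box (.const c) F ∈ cs.set →
      Node.fml (.neg (.box (.const c) F)) ∈ Γ → TabN L cs pb cut R Γ 0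
  | fNeg {Γ A n} : Node.fml (.neg (.neg A)) ∈ Γ →
      TabN L cs pb cut R (insert (Node.fml A) Γ) n → TabN L cs pb cut R Γ (n + 1)
  | fImp {Γ A B n} : Node.fml (.neg (.imp A B)) ∈ Γ →
      TabN L cs pb cut R (insert (Node.fml A) (insert (Node.fml (.neg B)) Γ)) n →
      TabN L cs pb cut R Γ (n + 1)
  | tImp {Γ A B m n} : Node.fml (.imp A B) ∈ Γ →
      TabN L cs pb cut R (insert (Node.fml (.neg A)) Γ) m →
      TabN L cs pb cut R (insert (Node.fml B) Γ) n →
      TabN L cs pb cut R Γ (m + n + 1)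
  | te {Γ t A n} : Node.fml (.box t A) ∈ Γ →
      TabN L cs pb cut R (insert (Node.pos t A) Γ) n → TabN L cs pb cut R Γ (n + 1)
  | fe {Γ t A n} : Node.fml (.neg (.box t A)) ∈ Γ →
      TabN L cs pb cut R (insert (Node.neg t A) Γ) n → TabN L cs pb cut R Γ (n + 1)
  | plusL {Γ t s A n} : Node.neg (.sum t s) A ∈ Γ →
      TabN L cs pb cut R (insert (Node.neg t A) Γ) n → TabN L cs pb cut R Γ (n + 1)
  | plusR {Γ t s A n} : Node.neg (.sum t s) A ∈ Γ →
      TabN L cs pb cut R (insert (Node.neg s A) Γ) n → TabN L cs pb cut R Γ (n + 1)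
  | appR {Γ s t A B n} : Node.pos s (.imp A B) ∈ Γ → Node.pos t A ∈ Γ →
      CSSub cs R (.imp A B) → OccRoot R (.app s t) →
      TabN L cs pb cut R (insert (Node.pos (.app s t) B) Γ) n →
      TabN L cs pb cut R Γ (n + 1)
  | rulePB {Γ A m n} : pb = true → CSSub cs R A →
      TabN L cs pb cut R (insert (Node.fml A) Γ) m →
      TabN L cs pb cut R (insert (Node.fml (.neg A)) Γ) n →
      TabN L cs pb cut R Γ (m + n + 1)
  | rulePBe {Γ t A m n} : pb = true → CSSub cs R A → OccRoot R t →
      TabN L cs pb cut R (insert (Node.pos t A) Γ) m →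
      TabN L cs pb cut R (insert (Node.neg t A) Γ) n →
      TabN L cs pb cut R Γ (m + n + 1)
  | cutF {Γ A m n} : cut = true →
      TabN L cs pb cut R (insert (Node.fml A) Γ) m →
      TabN L cs pb cut R (insert (Node.fml (.neg A)) Γ) n →
      TabN L cs pb cut R Γ (m + n + 1)
  | cutE {Γ t A m n} : cut = true →
      TabN L cs pb cut R (insert (Node.pos t A) Γ) m →
      TabN L cs pb cut R (insert (Node.neg t A) Γ) n →
      TabN L cs pb cut R Γ (m + n + 1)
  | ruleT {Γ t A n} : L.hasT = true → Node.pos t A ∈ Γ →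
      TabN L cs pb cut R (insert (Node.fml A) Γ) n → TabN L cs pb cut R Γ (n + 1)
  | ruleD {Γ t n} : L.hasD = true → Node.pos t .bot ∈ Γ →
      TabN L cs pb cut R (insert (Node.fml .bot) Γ) n → TabN L cs pb cut R Γ (n + 1)
  | rule4 {Γ t A n} : L.has4 = true → Node.neg (.bang t) (.box t A) ∈ Γ →
      TabN L cs pb cut R (insert (Node.neg t A) Γ) n → TabN L cs pb cut R Γ (n + 1)
  | ruleB {Γ t A n} : L.hasB = true → Node.neg (.qbar t) (.neg (.box t A)) ∈ Γ →
      TabN L cs pb cut R (insert (Node.fml A) Γ) n → TabN L cs pb cut R Γ (n + 1)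
  | rule5 {Γ t A n} : L.has5 = true → Node.neg (.quest t) (.neg (.box t A)) ∈ Γ →
      TabN L cs pb cut R (insert (Node.pos t A) Γ) n → TabN L cs pb cut R Γ (n + 1)

/-- There is a closed tableau below the branch `Γ` (root set `R`). -/
def Tab (L : Logic) (cs : ConstSpec L) (pb cut : Bool) (R : Set Fml)
    (Γ : Set Node) : Prop :=
  ∃ n, TabN L cs pb cut R Γ n

/-- A tableau proof of `A`: a closed tableau whose root is `¬A`. -/
def TabProof (L : Logic) (cs : ConstSpec L) (pb cut : Bool) (A : Fml) : Prop :=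
  Tab L cs pb cut {Fml.neg A} {Node.fml (Fml.neg A)}

/-- A single application of a JL^e_CS-tableau rule to the branch `Γ` (root set
`R`), producing the list of extended branches (one for a non-branching rule,
two for a branching rule). -/
inductive RuleApp (L : Logic) (cs : ConstSpec L) (R : Set Fml) (Γ : Set Node) :
    List (Set Node) → Prop
  | fNeg {A} : Node.fml (.neg (.neg A)) ∈ Γ →
      RuleApp L cs R Γ [insert (Node.fml A) Γ]
  | fImp {A B} : Node.fml (.neg (.imp A B)) ∈ Γ →
      RuleApp L cs R Γ [insert (Node.fml A) (insert (Node.fml (.neg B)) Γ)]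
  | tImp {A B} : Node.fml (.imp A B) ∈ Γ →
      RuleApp L cs R Γ [insert (Node.fml (.neg A)) Γ, insert (Node.fml B) Γ]
  | te {t A} : Node.fml (.box t A) ∈ Γ → RuleApp L cs R Γ [insert (Node.pos t A) Γ]
  | fe {t A} : Node.fml (.neg (.box t A)) ∈ Γ →
      RuleApp L cs R Γ [insert (Node.neg t A) Γ]
  | plusL {t s A} : Node.neg (.sum t s) A ∈ Γ →
      RuleApp L cs R Γ [insert (Node.neg t A) Γ]
  | plusR {t s A} : Node.neg (.sum t s) A ∈ Γ →
      RuleApp L cs R Γ [insert (Node.neg s A) Γ]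
  | appR {s t A B} : Node.pos s (.imp A B) ∈ Γ → Node.pos t A ∈ Γ →
      CSSub cs R (.imp A B) → OccRoot R (.app s t) →
      RuleApp L cs R Γ [insert (Node.pos (.app s t) B) Γ]
  | rulePB {A} : CSSub cs R A →
      RuleApp L cs R Γ [insert (Node.fml A) Γ, insert (Node.fml (.neg A)) Γ]
  | rulePBe {t A} : CSSub cs R A → OccRoot R t →
      RuleApp L cs R Γ [insert (Node.pos t A) Γ, insert (Node.neg t A) Γ]
  | ruleT {t A} : L.hasT = true → Node.pos t A ∈ Γ →
      RuleApp L cs R Γ [insert (Node.fml A) Γ]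
  | ruleD {t} : L.hasD = true → Node.pos t .bot ∈ Γ →
      RuleApp L cs R Γ [insert (Node.fml .bot) Γ]
  | rule4 {t A} : L.has4 = true → Node.neg (.bang t) (.box t A) ∈ Γ →
      RuleApp L cs R Γ [insert (Node.neg t A) Γ]
  | ruleB {t A} : L.hasB = true → Node.neg (.qbar t) (.neg (.box t A)) ∈ Γ →
      RuleApp L cs R Γ [insert (Node.fml A) Γ]
  | rule5 {t A} : L.has5 = true → Node.neg (.quest t) (.neg (.box t A)) ∈ Γ →
      RuleApp L cs R Γ [insert (Node.pos t A) Γ]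

/-- Satisfaction of tableau nodes in an M-model: `M` satisfies `[t,A]` iff
`A ∈ E(t)`, and satisfies `∼[t,A]` iff `A ∉ E(t)`. -/
def NodeSat (M : MModel) : Node → Prop
  | .fml A => M.sat A
  | .pos t A => A ∈ M.ev t
  | .neg t A => A ∉ M.ev t

/-- Branches reachable from the initial branch by tableau rule applications. -/
inductive Reach (L : Logic) (cs : ConstSpec L) (R : Set Fml) :
    Set Node → Set Node → Prop
  | refl (Γ) : Reach L cs R Γ Γ
  | step {Γ Γ' Γ'' exts} : Reach L cs R Γ Γ' → RuleApp L cs R Γ' exts →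
      Γ'' ∈ exts → Reach L cs R Γ Γ''

/-- One non-redundant tableau construction step: a rule application properly
extending the branch. -/
def Step (L : Logic) (cs : ConstSpec L) (R : Set Fml) (Γ Γ' : Set Node) : Prop :=
  ∃ exts, RuleApp L cs R Γ exts ∧ Γ' ∈ exts ∧ Γ ⊂ Γ'

/-- The term is in the language of the logic `L` (which contains those
operations occurring in the axioms of `L`). -/
def TermInLang (L : Logic) : Term → Prop
  | .var _ => True
  | .const _ => True
  | .app s t => TermInLang L s ∧ TermInLang L t
  | .sum s t => TermInLang L s ∧ TermInLang L t
  | .bang t => L.has4 = true ∧ TermInLang L t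
  | .quest t => L.has5 = true ∧ TermInLang L t
  | .qbar t => L.hasB = true ∧ TermInLang L t

/-- The formula is in the language of the logic `L`. -/
def FmlInLang (L : Logic) : Fml → Prop
  | .prop _ => True
  | .bot => True
  | .neg A => FmlInLang L A
  | .imp A B => FmlInLang L A ∧ FmlInLang L B
  | .box t A => TermInLang L t ∧ FmlInLang L A

/-- The initial branch of a tableau for a finite set `S` of formulas. -/
def branchOf (S : Finset Fml) : Set Node := Node.fml '' (↑S : Set Fml)

end JLTab

namespace JLTab

/-- Compactness and weakening. -/
theorem TabN.compact {L : Logic} {cs : ConstSpec L} {pb cut : Bool} {R : Set Fml}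
    {Γ : Set Node} {n : ℕ} (h : TabN L cs pb cut R Γ n) :
    ∃ Δ : Set Node, Δ.Finite ∧ Δ ⊆ Γ ∧ ∀ Γ2, Δ ⊆ Γ2 → TabN L cs pb cut R Γ2 n := by
  have key : ∀ {X : Node} {Γ Δ : Set Node}, Δ.Finite → Δ ⊆ insert X Γ →
      (Δ \ {X}).Finite ∧ Δ \ {X} ⊆ Γ ∧ ∀ Γ2, Δ \ {X} ⊆ Γ2 → Δ ⊆ insert X Γ2 := by
    intro X Γ Δ hf hs
    refine ⟨hf.subset Set.sdiff_subset, ?_, ?_⟩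
    · rintro y ⟨hy, hne⟩
      rcases hs hy with h | h
      · exact absurd h hne
      · exact h
    · intro Γ2 hΓ y hy
      by_cases hyx : y = X
      · exact Or.inl hyx
      · exact Or.inr (hΓ ⟨hy, hyx⟩)
  have one : ∀ {X Y : Node} {Γ : Set Node} {n n2 : ℕ}, Y ∈ Γ →
      (∃ Δ : Set Node, Δ.Finite ∧ Δ ⊆ insert X Γ ∧ ∀ Γ2, Δ ⊆ Γ2 → TabN L cs pb cut R Γ2 n) →
      (∀ Γ2, Y ∈ Γ2 → TabN L cs pb cut R (insert X Γ2) n → TabN L cs pb cut R Γ2 n2) →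
      ∃ Δ : Set Node, Δ.Finite ∧ Δ ⊆ Γ ∧ ∀ Γ2, Δ ⊆ Γ2 → TabN L cs pb cut R Γ2 n2 := by
    rintro X Y Γ n n2 hY ⟨Δ, hf, hs, hT⟩ hr
    obtain ⟨k1, k2, k3⟩ := key hf hs
    refine ⟨insert Y (Δ \ {X}), k1.insert _, Set.insert_subset hY k2, fun Γ2 hΓ => ?_⟩
    rw [Set.insert_subset_iff] at hΓ
    exact hr Γ2 hΓ.1 (hT _ (k3 _ hΓ.2))
  have two : ∀ {X Z : Node} {Γ : Set Node} {m n n2 : ℕ},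
      (∃ Δ : Set Node, Δ.Finite ∧ Δ ⊆ insert X Γ ∧ ∀ Γ2, Δ ⊆ Γ2 → TabN L cs pb cut R Γ2 m) →
      (∃ Δ : Set Node, Δ.Finite ∧ Δ ⊆ insert Z Γ ∧ ∀ Γ2, Δ ⊆ Γ2 → TabN L cs pb cut R Γ2 n) →
      (∀ Γ2, TabN L cs pb cut R (insert X Γ2) m → TabN L cs pb cut R (insert Z Γ2) n →
        TabN L cs pb cut R Γ2 n2) →
      ∃ Δ : Set Node, Δ.Finite ∧ Δ ⊆ Γ ∧ ∀ Γ2, Δ ⊆ Γ2 → TabN L cs pb cut R Γ2 n2 := by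
    rintro X Z Γ m n n2 ⟨Δ, hf, hs, hT⟩ ⟨Δ2, hf2, hs2, hT2⟩ hr
    obtain ⟨k1, k2, k3⟩ := key hf hs
    obtain ⟨l1, l2, l3⟩ := key hf2 hs2
    refine ⟨(Δ \ {X}) ∪ (Δ2 \ {Z}), k1.union l1, Set.union_subset k2 l2, fun Γ2 hΓ => ?_⟩
    rw [Set.union_subset_iff] at hΓ
    exact hr Γ2 (hT _ (k3 _ hΓ.1)) (hT2 _ (l3 _ hΓ.2))
  induction h with
  | @closeF Γ A h1 h2 =>
    refine ⟨{Node.fml A, Node.fml (.neg A)}, Set.toFinite _, ?_, fun Γ2 hΓ => ?_⟩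
    · rintro y (rfl | rfl) <;> assumption
    · exact .closeF (hΓ (Or.inl rfl)) (hΓ (Or.inr rfl))
  | @closeE Γ t A h1 h2 =>
    refine ⟨{Node.pos t A, Node.neg t A}, Set.toFinite _, ?_, fun Γ2 hΓ => ?_⟩
    · rintro y (rfl | rfl) <;> assumption
    · exact .closeE (hΓ (Or.inl rfl)) (hΓ (Or.inr rfl))
  | closeBot h1 =>
    exact ⟨_, Set.finite_singleton _, Set.singleton_subset_iff.2 h1,
      fun Γ2 hΓ => .closeBot (Set.singleton_subset_iff.1 hΓ)⟩
  | closeCS h0 h1 =>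
    exact ⟨_, Set.finite_singleton _, Set.singleton_subset_iff.2 h1,
      fun Γ2 hΓ => .closeCS h0 (Set.singleton_subset_iff.1 hΓ)⟩
  | fNeg h1 _ ih => exact one h1 ih fun Γ2 => .fNeg
  | fImp h1 _ ih =>
    obtain ⟨Δ, hf, hs, hT⟩ := ih
    obtain ⟨k1, k2, k3⟩ := key hf hs
    obtain ⟨l1, l2, l3⟩ := key k1 k2
    refine ⟨insert _ _, l1.insert _, Set.insert_subset h1 l2, fun Γ2 hΓ => ?_⟩
    rw [Set.insert_subset_iff] at hΓ
    exact .fImp hΓ.1 (hT _ (k3 _ (l3 _ hΓ.2)))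
  | tImp h1 _ _ ih1 ih2 =>
    obtain ⟨Δ, hf, hs, hT⟩ := ih1
    obtain ⟨Δ2, hf2, hs2, hT2⟩ := ih2
    obtain ⟨k1, k2, k3⟩ := key hf hs
    obtain ⟨l1, l2, l3⟩ := key hf2 hs2
    refine ⟨insert _ (_ ∪ _), (k1.union l1).insert _,
      Set.insert_subset h1 (Set.union_subset k2 l2), fun Γ2 hΓ => ?_⟩
    rw [Set.insert_subset_iff, Set.union_subset_iff] at hΓ
    exact .tImp hΓ.1 (hT _ (k3 _ hΓ.2.1)) (hT2 _ (l3 _ hΓ.2.2))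
  | te h1 _ ih => exact one h1 ih fun Γ2 => .te
  | fe h1 _ ih => exact one h1 ih fun Γ2 => .fe
  | plusL h1 _ ih => exact one h1 ih fun Γ2 => .plusL
  | plusR h1 _ ih => exact one h1 ih fun Γ2 => .plusR
  | appR h1 h2 h3 h4 _ ih =>
    obtain ⟨Δ, hf, hs, hT⟩ := ih
    obtain ⟨k1, k2, k3⟩ := key hf hs
    refine ⟨insert _ (insert _ _), (k1.insert _).insert _,
      Set.insert_subset h1 (Set.insert_subset h2 k2), fun Γ2 hΓ => ?_⟩
    rw [Set.insert_subset_iff, Set.insert_subset_iff] at hΓ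
    exact .appR hΓ.1 hΓ.2.1 h3 h4 (hT _ (k3 _ hΓ.2.2))
  | rulePB h1 h2 _ _ ih1 ih2 => exact two ih1 ih2 fun Γ2 => .rulePB h1 h2
  | rulePBe h1 h2 h3 _ _ ih1 ih2 => exact two ih1 ih2 fun Γ2 => .rulePBe h1 h2 h3
  | cutF h1 _ _ ih1 ih2 => exact two ih1 ih2 fun Γ2 => .cutF h1
  | cutE h1 _ _ ih1 ih2 => exact two ih1 ih2 fun Γ2 => .cutE h1
  | ruleT h0 h1 _ ih => exact one h1 ih fun Γ2 => .ruleT h0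
  | ruleD h0 h1 _ ih => exact one h1 ih fun Γ2 => .ruleD h0
  | rule4 h0 h1 _ ih => exact one h1 ih fun Γ2 => .rule4 h0
  | ruleB h0 h1 _ ih => exact one h1 ih fun Γ2 => .ruleB h0
  | rule5 h0 h1 _ ih => exact one h1 ih fun Γ2 => .rule5 h0

/-- Every open branch extends to a maximal open branch. -/
theorem exists_maximal_open {L : Logic} {cs : ConstSpec L} {pb cut : Bool} {R : Set Fml}
    {Γ₀ : Set Node} (h : ¬ Tab L cs pb cut R Γ₀) :
    ∃ Γ, Γ₀ ⊆ Γ ∧ Maximal (fun Γ => ¬ Tab L cs pb cut R Γ) Γ := by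
  refine zorn_subset_nonempty {Γ | ¬ Tab L cs pb cut R Γ} ?_ Γ₀ h
  intro c hc hchain hne
  refine ⟨⋃₀ c, ?_, fun s hs => Set.subset_sUnion_of_mem hs⟩
  rintro ⟨n, hn⟩
  obtain ⟨Δ, hf, hs, hT⟩ := hn.compact
  obtain ⟨Γ, hΓ, hsub⟩ :=
    DirectedOn.exists_mem_subset_of_finite_of_subset_sUnion hne hchain.directedOn hf hs
  exact hc hΓ ⟨n, hT _ hsub⟩

mutual
/-- Truth in the structure induced by a branch. -/
def gsat (L : Logic) (Γ : Set Node) : Fml → Prop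
  | .prop n => Node.fml (.prop n) ∈ Γ
  | .bot => False
  | .neg A => ¬ gsat L Γ A
  | .imp A B => gsat L Γ A → gsat L Γ B
  | .box t A => gev L Γ A t
termination_by A => (sizeOf A, 0)

/-- Evidence in the structure induced by a branch. -/
def gev (L : Logic) (Γ : Set Node) : Fml → Term → Prop
  | A, .var n => Node.pos (.var n) A ∈ Γ
  | A, .const n => Node.pos (.const n) A ∈ Γ
  | A, .app s t => Node.pos (.app s t) A ∈ Γ
  | A, .sum s t => Node.pos (.sum s t) A ∈ Γ ∨ gev L Γ A s ∨ gev L Γ A t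
  | .box u A, .bang t => Node.pos (.bang t) (.box u A) ∈ Γ ∨
      (L.has4 = true ∧ u = t ∧ gev L Γ A u)
  | A, .bang t => Node.pos (.bang t) A ∈ Γ
  | .neg (.box u A), .qbar t => Node.pos (.qbar t) (.neg (.box u A)) ∈ Γ ∨
      (L.hasB = true ∧ u = t ∧ ¬ gsat L Γ A)
  | A, .qbar t => Node.pos (.qbar t) A ∈ Γ
  | .neg (.box u A), .quest t => Node.pos (.quest t) (.neg (.box u A)) ∈ Γ ∨
      (L.has5 = true ∧ u = t ∧ ¬ gev L Γ A u)
  | A, .quest t => Node.pos (.quest t) A ∈ Γ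
termination_by A t => (sizeOf A, sizeOf t)
end

/-- Inversion for the induced evidence. -/
theorem gev_iff (L : Logic) (Γ : Set Node) (A : Fml) (t : Term) :
    gev L Γ A t ↔ (Node.pos t A ∈ Γ ∨
      (∃ s u, t = .sum s u ∧ (gev L Γ A s ∨ gev L Γ A u)) ∨
      (∃ u B, t = .bang u ∧ A = .box u B ∧ L.has4 = true ∧ gev L Γ B u) ∨
      (∃ u B, t = .qbar u ∧ A = .neg (.box u B) ∧ L.hasB = true ∧ ¬ gsat L Γ B) ∨
      (∃ u B, t = .quest u ∧ A = .neg (.box u B) ∧ L.has5 = true ∧ ¬ gev L Γ B u)) := by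
  cases t with
  | var n => simp [gev]
  | const n => simp [gev]
  | app s t => simp [gev]
  | sum s t => simp [gev]
  | bang t =>
    cases A with
    | box u B => simp [gev]; grind
    | _ => simp [gev]
  | qbar t =>
    cases A with
    | neg C => cases C with
      | box u B => simp [gev]; grind
      | _ => simp [gev]
    | _ => simp [gev]
  | quest t =>
    cases A with
    | neg C => cases C with
      | box u B => simp [gev]; grind
      | _ => simp [gev]
    | _ => simp [gev]

/-- Saturated consistent branches. -/
structure Hint (L : Logic) (cs : ConstSpec L) (R : Set Fml) (Γ : Set Node) : Prop where
  cF : ∀ A, Node.fml A ∈ Γ → Node.fml (.neg A) ∉ Γ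
  cE : ∀ t A, Node.pos t A ∈ Γ → Node.neg t A ∉ Γ
  cBot : Node.fml .bot ∉ Γ
  cCS : ∀ c F, Fml.box (.const c) F ∈ cs.set → Node.fml (.neg (.box (.const c) F)) ∉ Γ
  fNeg : ∀ A, Node.fml (.neg (.neg A)) ∈ Γ → Node.fml A ∈ Γ
  fImp : ∀ A B, Node.fml (.neg (.imp A B)) ∈ Γ → Node.fml A ∈ Γ ∧ Node.fml (.neg B) ∈ Γ
  tImp : ∀ A B, Node.fml (.imp A B) ∈ Γ → Node.fml (.neg A) ∈ Γ ∨ Node.fml B ∈ Γ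
  te : ∀ t A, Node.fml (.box t A) ∈ Γ → Node.pos t A ∈ Γ
  fe : ∀ t A, Node.fml (.neg (.box t A)) ∈ Γ → Node.neg t A ∈ Γ
  plusL : ∀ t s A, Node.neg (.sum t s) A ∈ Γ → Node.neg t A ∈ Γ
  plusR : ∀ t s A, Node.neg (.sum t s) A ∈ Γ → Node.neg s A ∈ Γ
  app : ∀ s t A B, Node.pos s (.imp A B) ∈ Γ → Node.pos t A ∈ Γ → CSSub cs R (.imp A B) →
    OccRoot R (.app s t) → Node.pos (.app s t) B ∈ Γ
  pb : ∀ A, CSSub cs R A → Node.fml A ∈ Γ ∨ Node.fml (.neg A) ∈ Γ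
  pbe : ∀ t A, CSSub cs R A → OccRoot R t → Node.pos t A ∈ Γ ∨ Node.neg t A ∈ Γ
  rT : L.hasT = true → ∀ t A, Node.pos t A ∈ Γ → Node.fml A ∈ Γ
  rD : L.hasD = true → ∀ t, Node.pos t .bot ∉ Γ
  r4 : L.has4 = true → ∀ t A, Node.neg (.bang t) (.box t A) ∈ Γ → Node.neg t A ∈ Γ
  rB : L.hasB = true → ∀ t A, Node.neg (.qbar t) (.neg (.box t A)) ∈ Γ → Node.fml A ∈ Γ
  r5 : L.has5 = true → ∀ t A, Node.neg (.quest t) (.neg (.box t A)) ∈ Γ → Node.pos t A ∈ Γ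

theorem hint_of_maximal {L : Logic} {cs : ConstSpec L} {R : Set Fml} {Γ : Set Node}
    (h : Maximal (fun Γ => ¬ Tab L cs true false R Γ) Γ) : Hint L cs R Γ := by
  have h0 : ∀ n, ¬ TabN L cs true false R Γ n := fun n hn => h.1 ⟨n, hn⟩
  have hm : ∀ X, X ∈ Γ ∨ ∃ n, TabN L cs true false R (insert X Γ) n := by
    intro X
    by_cases hX : Tab L cs true false R (insert X Γ)
    · exact Or.inr hX
    · exact Or.inl (h.2 hX (Set.subset_insert _ _) (Set.mem_insert _ _))
  have one : ∀ X, (∀ n, ¬ TabN L cs true false R (insert X Γ) n) → X ∈ Γ := by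
    intro X hX
    rcases hm X with h | ⟨n, hn⟩
    · exact h
    · exact absurd hn (hX n)
  have two : ∀ X Y, (∀ m n, TabN L cs true false R (insert X Γ) m →
      TabN L cs true false R (insert Y Γ) n → False) → X ∈ Γ ∨ Y ∈ Γ := by
    intro X Y hXY
    rcases hm X with h | ⟨n, hn⟩
    · exact Or.inl h
    rcases hm Y with h | ⟨m, hm⟩
    · exact Or.inr h
    exact (hXY _ _ hn hm).elim
  constructor
  · exact fun A h1 h2 => h0 _ (.closeF h1 h2)
  · exact fun t A h1 h2 => h0 _ (.closeE h1 h2)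
  · exact fun h1 => h0 _ (.closeBot h1)
  · exact fun c F h1 h2 => h0 _ (.closeCS h1 h2)
  · exact fun A h1 => one _ fun n hn => h0 _ (.fNeg h1 hn)
  · intro A B h1
    have := h.2 (y := insert (Node.fml A) (insert (Node.fml (.neg B)) Γ))
      (fun ⟨n, hn⟩ => h0 _ (.fImp h1 hn))
      ((Set.subset_insert _ _).trans (Set.subset_insert _ _))
    exact ⟨this (Or.inl rfl), this (Or.inr (Or.inl rfl))⟩
  · exact fun A B h1 => two _ _ fun m n a b => h0 _ (.tImp h1 a b)
  · exact fun t A h1 => one _ fun n hn => h0 _ (.te h1 hn)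
  · exact fun t A h1 => one _ fun n hn => h0 _ (.fe h1 hn)
  · exact fun t s A h1 => one _ fun n hn => h0 _ (.plusL h1 hn)
  · exact fun t s A h1 => one _ fun n hn => h0 _ (.plusR h1 hn)
  · exact fun s t A B h1 h2 h3 h4 => one _ fun n hn => h0 _ (.appR h1 h2 h3 h4 hn)
  · exact fun A h1 => two _ _ fun m n a b => h0 _ (.rulePB rfl h1 a b)
  · exact fun t A h1 h2 => two _ _ fun m n a b => h0 _ (.rulePBe rfl h1 h2 a b)
  · exact fun hl t A h1 => one _ fun n hn => h0 _ (.ruleT hl h1 hn)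
  · exact fun hl t h1 => h0 _ (.closeBot (one _ fun n hn => h0 _ (.ruleD hl h1 hn)))
  · exact fun hl t A h1 => one _ fun n hn => h0 _ (.rule4 hl h1 hn)
  · exact fun hl t A h1 => one _ fun n hn => h0 _ (.ruleB hl h1 hn)
  · exact fun hl t A h1 => one _ fun n hn => h0 _ (.rule5 hl h1 hn)

/-- Truth lemma. -/
theorem Hint.truth {L : Logic} {cs : ConstSpec L} {R : Set Fml} {Γ : Set Node}
    (H : Hint L cs R Γ) : ∀ (k : ℕ) (A : Fml), sizeOf A ≤ k →
      (Node.fml A ∈ Γ → gsat L Γ A) ∧ (Node.fml (.neg A) ∈ Γ → ¬ gsat L Γ A) ∧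
      ∀ t, Node.neg t A ∈ Γ → ¬ gev L Γ A t := by
  intro k
  induction k with
  | zero => intro A hA; cases A <;> simp at hA
  | succ k ih =>
    intro A hA
    have hneg : ∀ t, Node.neg t A ∈ Γ → ¬ gev L Γ A t := by
      intro t
      induction t with
      | sum s u ihs ihu =>
        intro hn hg
        rw [gev_iff] at hg
        rcases hg with h | ⟨s2, u2, e, h⟩ | ⟨u, B, e, _⟩ | ⟨u, B, e, _⟩ | ⟨u, B, e, _⟩
        · exact H.cE _ _ h hn
        · cases e
          exact h.elim (ihs (H.plusL _ _ _ hn)) (ihu (H.plusR _ _ _ hn))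
        all_goals cases e
      | _ =>
        intro hn hg
        rw [gev_iff] at hg
        rcases hg with h | ⟨s2, u2, e, h⟩ | ⟨u, B, e, rfl, hl, h⟩ | ⟨u, B, e, rfl, hl, h⟩ |
          ⟨u, B, e, rfl, hl, h⟩
        · exact H.cE _ _ h hn
        all_goals cases e
        all_goals
          have hB : sizeOf B ≤ k := by simp at hA; omega
        all_goals first
          | exact (ih B hB).2.2 _ (H.r4 hl _ _ hn) h
          | exact h ((ih B hB).1 (H.rB hl _ _ hn))
          | exact h ((gev_iff _ _ _ _).2 (Or.inl (H.r5 hl _ _ hn)))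
    refine ⟨?_, ?_, hneg⟩
    · cases A with
      | prop n => intro h; simpa [gsat] using h
      | bot => intro h; exact (H.cBot h).elim
      | neg B =>
        intro h
        rw [gsat]
        exact (ih B (by simp at hA; omega)).2.1 h
      | imp B C =>
        intro h
        rw [gsat]
        intro hB
        rcases H.tImp _ _ h with h | h
        · exact absurd hB ((ih B (by simp at hA; omega)).2.1 h)
        · exact (ih C (by simp at hA; omega)).1 h
      | box t B =>
        intro h
        rw [gsat, gev_iff]
        exact Or.inl (H.te _ _ h)
    · cases A with
      | prop n => intro h hs; rw [gsat] at hs; exact H.cF _ hs h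
      | bot => intro h hs; rw [gsat] at hs; exact hs
      | neg B =>
        intro h hs
        rw [gsat] at hs
        exact hs ((ih B (by simp at hA; omega)).1 (H.fNeg _ h))
      | imp B C =>
        intro h hs
        rw [gsat] at hs
        obtain ⟨h1, h2⟩ := H.fImp _ _ h
        exact (ih C (by simp at hA; omega)).2.1 h2 (hs ((ih B (by simp at hA; omega)).1 h1))
      | box t B =>
        intro h hs
        rw [gsat] at hs
        exact (ih B (by simp at hA; omega)).2.2 t (H.fe _ _ h) hs

theorem Hint.truth_fml {L : Logic} {cs : ConstSpec L} {R : Set Fml} {Γ : Set Node}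
    (H : Hint L cs R Γ) {A : Fml} (h : Node.fml A ∈ Γ) : gsat L Γ A :=
  (H.truth _ A le_rfl).1 h

theorem Hint.gev_T {L : Logic} {cs : ConstSpec L} {R : Set Fml} {Γ : Set Node}
    (H : Hint L cs R Γ) (hT : L.hasT = true) : ∀ (k : ℕ) (A : Fml), sizeOf A ≤ k →
      ∀ t, gev L Γ A t → gsat L Γ A := by
  intro k
  induction k with
  | zero => intro A hA; cases A <;> simp at hA
  | succ k ih =>
    intro A hA t
    induction t with
    | sum s u ihs ihu =>
      intro hg
      rw [gev_iff] at hg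
      rcases hg with h | ⟨s2, u2, e, h⟩ | ⟨u, B, e, _⟩ | ⟨u, B, e, _⟩ | ⟨u, B, e, _⟩
      · exact H.truth_fml (H.rT hT _ _ h)
      · cases e
        exact h.elim ihs ihu
      all_goals cases e
    | _ =>
      intro hg
      rw [gev_iff] at hg
      rcases hg with h | ⟨s2, u2, e, h⟩ | ⟨u, B, e, rfl, hl, h⟩ | ⟨u, B, e, rfl, hl, h⟩ |
        ⟨u, B, e, rfl, hl, h⟩
      · exact H.truth_fml (H.rT hT _ _ h)
      all_goals cases e
      all_goals
        have hB : sizeOf B ≤ k := by simp at hA; omega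
      all_goals simp only [gsat]
      all_goals first
        | exact h
        | exact fun hx => h (ih B hB _ hx)

theorem Hint.gev_D {L : Logic} {cs : ConstSpec L} {R : Set Fml} {Γ : Set Node}
    (H : Hint L cs R Γ) (hD : L.hasD = true) (t : Term) : ¬ gev L Γ .bot t := by
  induction t with
  | sum s u ihs ihu =>
    intro hg
    rw [gev] at hg
    exact hg.elim (H.rD hD _) fun h => h.elim ihs ihu
  | _ =>
    intro hg
    rw [gev_iff] at hg
    simp at hg
    exact H.rD hD _ hg

/-- Satisfaction of nodes in the induced structure. -/
def gnode (L : Logic) (Γ : Set Node) : Node → Prop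
  | .fml A => gsat L Γ A
  | .pos t A => gev L Γ A t
  | .neg t A => ¬ gev L Γ A t

theorem SubTm.trans2 {u v w : Term} (h1 : SubTm u v) (h2 : SubTm v w) : SubTm u w := by
  induction h2 with
  | refl => exact h1
  | appL _ ih => exact .appL ih
  | appR _ ih => exact .appR ih
  | sumL _ ih => exact .sumL ih
  | sumR _ ih => exact .sumR ih
  | bang _ ih => exact .bang ih
  | quest _ ih => exact .quest ih
  | qbar _ ih => exact .qbar ih

theorem OccRoot.sub {R : Set Fml} {u v : Term} (h : OccRoot R v) (hs : SubTm u v) :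
    OccRoot R u := by
  obtain ⟨B, hB, ho⟩ := h
  refine ⟨B, hB, ?_⟩
  clear hB
  induction ho with
  | neg _ ih => exact .neg ih
  | impL _ ih => exact .impL ih
  | impR _ ih => exact .impR ih
  | boxT h => exact .boxT (hs.trans2 h)
  | boxF _ ih => exact .boxF ih

theorem Subf.trans2 {A B C : Fml} (h1 : Subf A B) (h2 : Subf B C) : Subf A C := by
  induction h2 with
  | refl => exact h1
  | neg _ ih => exact .neg ih
  | impL _ ih => exact .impL ih
  | impR _ ih => exact .impR ih
  | box _ ih => exact .box ih

theorem CSSub.sub {L : Logic} {cs : ConstSpec L} {R : Set Fml} {A B : Fml}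
    (h : CSSub cs R B) (hs : Subf A B) : CSSub cs R A := by
  rcases h with ⟨C, hC, h⟩ | ⟨C, hC, h⟩
  · exact Or.inl ⟨C, hC, hs.trans2 h⟩
  · exact Or.inr ⟨C, hC, hs.trans2 h⟩

/-- Soundness of the system with cut for the induced structure. -/
theorem Hint.sound {L : Logic} {cs : ConstSpec L} {R : Set Fml} {Γ : Set Node}
    (H : Hint L cs R Γ) {pb cut : Bool} {Δ : Set Node} {n : ℕ}
    (h : TabN L cs pb cut R Δ n) (hΔ : ∀ X ∈ Δ, gnode L Γ X) : False := by
  have ins : ∀ {X : Node} {Δ : Set Node}, gnode L Γ X → (∀ X ∈ Δ, gnode L Γ X) →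
      ∀ Y ∈ insert X Δ, gnode L Γ Y := by
    rintro X Δ hX hΔ Y (rfl | hY)
    · exact hX
    · exact hΔ _ hY
  have pos_of : ∀ {t A}, gev L Γ A t → CSSub cs R A → OccRoot R t → Node.pos t A ∈ Γ := by
    intro t A hg h1 h2
    rcases H.pbe t A h1 h2 with h | h
    · exact h
    · exact absurd hg ((H.truth _ A le_rfl).2.2 t h)
  induction h with
  | closeF h1 h2 =>
    have a := hΔ _ h1; have b := hΔ _ h2
    simp only [gnode, gsat] at a b; exact b a
  | closeE h1 h2 => exact hΔ _ h2 (hΔ _ h1)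
  | closeBot h1 => have a := hΔ _ h1; simp only [gnode, gsat] at a
  | @closeCS _ c F h1 h2 =>
    have a := hΔ _ h2
    simp only [gnode, gsat] at a
    rcases H.pb (.box (.const c) F) (Or.inr ⟨_, h1, .refl _⟩) with h | h
    · exact a ((gev_iff _ _ _ _).2 (Or.inl (H.te _ _ h)))
    · exact H.cCS _ _ h1 h
  | fNeg h1 _ ih =>
    have a := hΔ _ h1
    simp only [gnode, gsat, not_not] at a
    exact ih (ins a hΔ)
  | fImp h1 _ ih =>
    have a := hΔ _ h1
    simp only [gnode, gsat, Classical.not_imp] at a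
    exact ih (ins a.1 (ins (by simpa only [gnode, gsat] using a.2) hΔ))
  | @tImp _ A B _ _ h1 _ _ ih1 ih2 =>
    have a := hΔ _ h1
    simp only [gnode, gsat] at a
    by_cases hA : gsat L Γ A
    · exact ih2 (ins (a hA) hΔ)
    · exact ih1 (ins (by simpa only [gnode, gsat] using hA) hΔ)
  | te h1 _ ih =>
    have a := hΔ _ h1
    simp only [gnode, gsat] at a
    exact ih (ins a hΔ)
  | fe h1 _ ih =>
    have a := hΔ _ h1
    simp only [gnode, gsat] at a
    exact ih (ins a hΔ)
  | plusL h1 _ ih =>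
    have a := hΔ _ h1
    simp only [gnode, gev, not_or] at a
    exact ih (ins a.2.1 hΔ)
  | plusR h1 _ ih =>
    have a := hΔ _ h1
    simp only [gnode, gev, not_or] at a
    exact ih (ins a.2.2 hΔ)
  | appR h1 h2 h3 h4 _ ih =>
    refine ih (ins ?_ hΔ)
    have a := pos_of (hΔ _ h1) h3 (h4.sub (.appL (.refl _)))
    have b := pos_of (hΔ _ h2) (h3.sub (.impL (.refl _))) (h4.sub (.appR (.refl _)))
    exact (gev_iff _ _ _ _).2 (Or.inl (H.app _ _ _ _ a b h3 h4))
  | @rulePB _ A _ _ _ _ _ _ ih1 ih2 =>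
    by_cases hA : gsat L Γ A
    · exact ih1 (ins hA hΔ)
    · exact ih2 (ins (by simpa only [gnode, gsat] using hA) hΔ)
  | @rulePBe _ t A _ _ _ _ _ _ _ ih1 ih2 =>
    by_cases hA : gev L Γ A t
    · exact ih1 (ins hA hΔ)
    · exact ih2 (ins hA hΔ)
  | @cutF _ A _ _ _ _ _ ih1 ih2 =>
    by_cases hA : gsat L Γ A
    · exact ih1 (ins hA hΔ)
    · exact ih2 (ins (by simpa only [gnode, gsat] using hA) hΔ)
  | @cutE _ t A _ _ _ _ _ ih1 ih2 =>
    by_cases hA : gev L Γ A t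
    · exact ih1 (ins hA hΔ)
    · exact ih2 (ins hA hΔ)
  | ruleT hl h1 _ ih => exact ih (ins (H.gev_T hl _ _ le_rfl _ (hΔ _ h1)) hΔ)
  | ruleD hl h1 _ ih => exact H.gev_D hl _ (hΔ _ h1)
  | rule4 hl h1 _ ih =>
    have a := hΔ _ h1
    simp only [gnode, gev, not_or, hl, true_and] at a
    exact ih (ins a.2 hΔ)
  | ruleB hl h1 _ ih =>
    have a := hΔ _ h1
    simp only [gnode, gev, not_or, hl, true_and, not_not] at a
    exact ih (ins a.2 hΔ)
  | rule5 hl h1 _ ih =>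
    have a := hΔ _ h1
    simp only [gnode, gev, not_or, hl, true_and, not_not] at a
    exact ih (ins a.2 hΔ)

end JLTab
/-- Theorem 6, Cut Elimination: if a JL-formula is provable in
JL^e_CS + (cut), then it is provable in JL^e_CS without the unrestricted cut
rules. -/
theorem JLTab.cut_elimination (L : Logic) (cs : ConstSpec L) (A : Fml)
    (h : TabProof L cs true true A) : TabProof L cs true false A := by
  by_contra hno
  obtain ⟨Γ, hsub, hmax⟩ := exists_maximal_open hno
  have H := hint_of_maximal hmax
  obtain ⟨n, hn⟩ := h
  refine H.sound hn ?_
  rintro X rfl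
  exact H.truth_fml (hsub rfl)
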